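/- Let A, B, C be real symmetric traceless n×n matrices. Then (‖A‖² + ‖B‖² + ‖C‖²)² ≥ 2‖[A,B]‖² + 2‖[B,C]‖² + 2‖[C,A]‖². -/

import Mathlib

open Matrix BigOperators

/-- Frobenius norm squared of a real `n × n` matrix: the sum of the squares of all entries. -/
noncomputable def frobSq {n : ℕ} (A : Matrix (Fin n) (Fin n) ℝ) : ℝ :=
  ∑ i, ∑ j, (A i j) ^ 2

/-- The commutator `[A, B] = A * B - B * A`. -/
def mcomm {n : ℕ} (A B : Matrix (Fin n) (Fin n) ℝ) : Matrix (Fin n) (Fin n) ℝ :=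
  A * B - B * A

/-- Trace inner product of two matrices. -/
noncomputable def frobIp {n : ℕ} (A B : Matrix (Fin n) (Fin n) ℝ) : ℝ :=
  ∑ i, ∑ j, A i j * B i j

lemma frobSq_eq_ip {n : ℕ} (A : Matrix (Fin n) (Fin n) ℝ) : frobSq A = frobIp A A := by
  simp [frobSq, frobIp, sq]

lemma frobIp_eq_trace {n : ℕ} (A B : Matrix (Fin n) (Fin n) ℝ) :
    frobIp A B = (A * Bᵀ).trace := by
  simp [frobIp, Matrix.trace, Matrix.mul_apply]

lemma frobIp_conj {n : ℕ} (U A B : Matrix (Fin n) (Fin n) ℝ) (hU : U * Uᵀ = 1) :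
    frobIp (Uᵀ * A * U) (Uᵀ * B * U) = frobIp A B := by
  rw [frobIp_eq_trace, frobIp_eq_trace]
  have : Uᵀ * A * U * (Uᵀ * B * U)ᵀ = Uᵀ * (A * Bᵀ * U) := by
    simp only [Matrix.transpose_mul, Matrix.transpose_transpose]
    calc Uᵀ * A * U * (Uᵀ * (Bᵀ * U)) = Uᵀ * A * (U * Uᵀ) * (Bᵀ * U) := by
          simp only [Matrix.mul_assoc]
      _ = _ := by rw [hU]; simp only [Matrix.mul_assoc, Matrix.one_mul]
  rw [this, Matrix.trace_mul_comm, Matrix.mul_assoc, hU, Matrix.mul_one]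

lemma frobSq_conj {n : ℕ} (U A : Matrix (Fin n) (Fin n) ℝ) (hU : U * Uᵀ = 1) :
    frobSq (Uᵀ * A * U) = frobSq A := by
  rw [frobSq_eq_ip, frobSq_eq_ip, frobIp_conj U A A hU]

lemma mcomm_conj {n : ℕ} (U A B : Matrix (Fin n) (Fin n) ℝ) (hU : U * Uᵀ = 1) :
    mcomm (Uᵀ * A * U) (Uᵀ * B * U) = Uᵀ * mcomm A B * U := by
  have h : ∀ X Y : Matrix (Fin n) (Fin n) ℝ, Uᵀ * X * U * (Uᵀ * Y * U) = Uᵀ * (X * Y) * U := by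
    intro X Y
    calc Uᵀ * X * U * (Uᵀ * Y * U) = Uᵀ * X * (U * Uᵀ) * (Y * U) := by
          simp only [Matrix.mul_assoc]
      _ = _ := by rw [hU]; simp only [Matrix.mul_assoc, Matrix.one_mul]
  unfold mcomm
  rw [h, h, Matrix.mul_sub, Matrix.sub_mul]

lemma frobSq_mcomm_diag {n : ℕ} (d : Fin n → ℝ) (B : Matrix (Fin n) (Fin n) ℝ) :
    frobSq (mcomm (diagonal d) B) = ∑ i, ∑ j, (d i - d j) ^ 2 * (B i j) ^ 2 := by
  unfold frobSq mcomm
  refine Finset.sum_congr rfl fun i _ => Finset.sum_congr rfl fun j _ => ?_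
  rw [Matrix.sub_apply, Matrix.diagonal_mul, Matrix.mul_diagonal]
  ring

lemma frobSq_diag {n : ℕ} (d : Fin n → ℝ) : frobSq (diagonal d) = ∑ i, d i ^ 2 := by
  unfold frobSq
  refine Finset.sum_congr rfl fun i _ => ?_
  rw [Finset.sum_eq_single i]
  · simp
  · intro j _ hj
    simp [Matrix.diagonal_apply_ne' d hj]
  · simp

lemma frobSq_nonneg {n : ℕ} (A : Matrix (Fin n) (Fin n) ℝ) : 0 ≤ frobSq A :=
  Finset.sum_nonneg fun _ _ => Finset.sum_nonneg fun _ _ => sq_nonneg _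

lemma two_entry_le {n : ℕ} (X : Matrix (Fin n) (Fin n) ℝ) (hX : X.IsSymm) (i j : Fin n)
    (hij : i ≠ j) : 2 * X i j ^ 2 ≤ frobSq X := by
  unfold frobSq
  rw [← Fintype.sum_prod_type' (f := fun i j => X i j ^ 2)]
  have h := Finset.sum_le_univ_sum_of_nonneg (f := fun p : Fin n × Fin n => X p.1 p.2 ^ 2)
    (s := {(i, j), (j, i)}) (fun _ => sq_nonneg _)
  rw [Finset.sum_pair (by simp [hij])] at h
  simp only [hX.apply i j] at h
  linarith

lemma bessel {n : ℕ} (B C : Matrix (Fin n) (Fin n) ℝ) (hB : B.IsSymm) (hC : C.IsSymm)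
    (h0 : frobIp B C = 0) (i j : Fin n) (hij : i ≠ j) :
    2 * (frobSq C * B i j ^ 2 + frobSq B * C i j ^ 2) ≤ frobSq B * frobSq C := by
  set b := frobSq B with hb
  set c := frobSq C with hc
  have hb0 : 0 ≤ b := frobSq_nonneg B
  have hc0 : 0 ≤ c := frobSq_nonneg C
  have exp : ∀ x y : ℝ, frobSq (x • B + y • C) = x ^ 2 * b + y ^ 2 * c := by
    intro x y
    have : frobSq (x • B + y • C) = x ^ 2 * b + y ^ 2 * c + 2 * x * y * frobIp B C := by
      rw [hb, hc]
      simp only [frobSq, frobIp, Finset.mul_sum, ← Finset.sum_add_distrib]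
      refine Finset.sum_congr rfl fun i _ => Finset.sum_congr rfl fun j _ => ?_
      simp only [Matrix.add_apply, Matrix.smul_apply, smul_eq_mul]
      ring
    rw [this, h0]; ring
  have h := two_entry_le ((c * B i j) • B + (b * C i j) • C)
    ((hB.smul _).add (hC.smul _)) i j hij
  rw [exp] at h
  simp only [Matrix.add_apply, Matrix.smul_apply, smul_eq_mul] at h
  set s := c * B i j ^ 2 + b * C i j ^ 2 with hs
  have hs0 : 0 ≤ s := by positivity
  have h' : s * (2 * s) ≤ s * (b * c) := by
    rw [hs]; nlinarith [h]
  rcases hs0.eq_or_lt with h1 | h1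
  · rw [← h1]; simp; positivity
  · exact le_of_mul_le_mul_left h' h1

lemma sq_two {n : ℕ} (d : Fin n → ℝ) (i j : Fin n) :
    (d i - d j) ^ 2 ≤ 2 * ∑ k, d k ^ 2 := by
  by_cases hij : i = j
  · subst hij
    simp only [sub_self]
    have : 0 ≤ ∑ k, d k ^ 2 := Finset.sum_nonneg fun _ _ => sq_nonneg _
    linarith
  have h := Finset.sum_le_univ_sum_of_nonneg (f := fun k => d k ^ 2)
    (s := {i, j}) (fun _ => sq_nonneg _)
  rw [Finset.sum_pair hij] at h
  nlinarith [sq_nonneg (d i + d j)]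

lemma sq_three {n : ℕ} (d : Fin n → ℝ) (i j k : Fin n) (hij : i ≠ j) (hik : i ≠ k) (hjk : j ≠ k) :
    (d i - d j) ^ 2 + (d i - d k) ^ 2 ≤ 3 * ∑ k, d k ^ 2 := by
  have h := Finset.sum_le_univ_sum_of_nonneg (f := fun k => d k ^ 2)
    (s := {i, j, k}) (fun _ => sq_nonneg _)
  rw [Finset.sum_insert (by simp [hij, hik]), Finset.sum_pair hjk] at h
  nlinarith [sq_nonneg (d i + d j + d k), sq_nonneg (d j - d k)]

lemma sq_four {n : ℕ} (d : Fin n → ℝ) (i j k l : Fin n) (hij : i ≠ j) (hkl : k ≠ l)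
    (h1 : ¬ (k = i ∧ l = j)) (h2 : ¬ (k = j ∧ l = i)) :
    (d i - d j) ^ 2 + (d k - d l) ^ 2 ≤ 3 * ∑ k, d k ^ 2 := by
  by_cases hki : k = i
  · subst hki
    exact sq_three d k j l hij hkl (fun h => h1 ⟨rfl, h.symm⟩)
  by_cases hkj : k = j
  · subst hkj
    have := sq_three d k i l hij.symm hkl (fun h => h2 ⟨rfl, h.symm⟩)
    nlinarith
  by_cases hli : l = i
  · subst hli
    have := sq_three d l j k hij hkl.symm (fun h => hkj h.symm)
    nlinarith
  by_cases hlj : l = j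
  · subst hlj
    have := sq_three d l i k hij.symm hkl.symm (fun h => hki h.symm)
    nlinarith
  have h := Finset.sum_le_univ_sum_of_nonneg (f := fun k => d k ^ 2)
    (s := {i, j, k, l}) (fun _ => sq_nonneg _)
  rw [Finset.sum_insert (by simp [hij, Ne.symm hki, Ne.symm hli]),
    Finset.sum_insert (by simp [Ne.symm hkj, Ne.symm hlj]), Finset.sum_pair hkl] at h
  nlinarith [sq_nonneg (d i + d j), sq_nonneg (d k + d l), sq_nonneg (d i), sq_nonneg (d j),
    sq_nonneg (d k), sq_nonneg (d l)]

lemma key_diag {n : ℕ} (d : Fin n → ℝ) (B C : Matrix (Fin n) (Fin n) ℝ) (hB : B.IsSymm)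
    (hC : C.IsSymm) (h0 : frobIp B C = 0) :
    frobSq C * frobSq (mcomm (diagonal d) B) + frobSq B * frobSq (mcomm (diagonal d) C)
      ≤ 3 * (frobSq (diagonal d) * frobSq B * frobSq C) := by
  rw [frobSq_mcomm_diag, frobSq_mcomm_diag, frobSq_diag]
  have hbes := bessel B C hB hC h0
  have hbs : frobSq B = ∑ i, ∑ j, B i j ^ 2 := rfl
  have hcs : frobSq C = ∑ i, ∑ j, C i j ^ 2 := rfl
  have hb0 : 0 ≤ frobSq B := frobSq_nonneg B
  have hc0 : 0 ≤ frobSq C := frobSq_nonneg C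
  generalize frobSq B = b at *
  generalize frobSq C = c at *
  have ha0 : 0 ≤ ∑ k, d k ^ 2 := Finset.sum_nonneg fun _ _ => sq_nonneg _
  have h2 := sq_two d
  have h4 := sq_four d
  generalize (∑ k, d k ^ 2) = a at *
  let w : Fin n → Fin n → ℝ := fun i j => c * B i j ^ 2 + b * C i j ^ 2
  have hw0 : ∀ i j, 0 ≤ w i j := fun i j => by
    change 0 ≤ c * B i j ^ 2 + b * C i j ^ 2
    positivity
  have hwsym : ∀ i j, w j i = w i j := fun i j => by
    simp only [w, hB.apply i j, hC.apply i j]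
  have hwsum : ∑ i, ∑ j, w i j = 2 * (b * c) := by
    simp only [w, Finset.sum_add_distrib, ← Finset.mul_sum]
    rw [← hbs, ← hcs]; ring
  have hL : c * ∑ i, ∑ j, (d i - d j) ^ 2 * B i j ^ 2 + b * ∑ i, ∑ j, (d i - d j) ^ 2 * C i j ^ 2
      = ∑ i, ∑ j, (d i - d j) ^ 2 * w i j := by
    simp only [w, Finset.mul_sum, ← Finset.sum_add_distrib]
    refine Finset.sum_congr rfl fun i _ => Finset.sum_congr rfl fun j _ => ?_
    ring
  rw [hL]
  by_cases hall : ∀ i j, (d i - d j) ^ 2 ≤ 3 / 2 * a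
  · calc ∑ i, ∑ j, (d i - d j) ^ 2 * w i j ≤ ∑ i, ∑ j, (3 / 2 * a) * w i j := by
          refine Finset.sum_le_sum fun i _ => Finset.sum_le_sum fun j _ => ?_
          exact mul_le_mul_of_nonneg_right (hall i j) (hw0 i j)
      _ = (3 / 2 * a) * ∑ i, ∑ j, w i j := by simp only [Finset.mul_sum]
      _ ≤ _ := by rw [hwsum]; linarith
  · push Not at hall
    obtain ⟨i₀, j₀, h⟩ := hall
    have hne : i₀ ≠ j₀ := by
      rintro rfl
      simp only [sub_self] at h
      linarith
    obtain ⟨s, hs⟩ : ∃ s, s = (d i₀ - d j₀) ^ 2 - 3 / 2 * a := ⟨_, rfl⟩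
    have hs0 : 0 ≤ s := by linarith
    have hs1 : s ≤ a / 2 := by linarith [h2 i₀ j₀]
    have hbound : ∀ i j, (d i - d j) ^ 2 * w i j ≤ (3 / 2 * a - s) * w i j
        + (if i = i₀ then (if j = j₀ then 2 * s * w i j else 0) else 0)
        + (if i = j₀ then (if j = i₀ then 2 * s * w i j else 0) else 0) := by
      intro i j
      have e1 : 0 ≤ (if i = i₀ then (if j = j₀ then 2 * s * w i j else 0) else 0) := by
        split_ifs <;> first | exact le_rfl | exact mul_nonneg (by linarith) (hw0 i j)
      have e2 : 0 ≤ (if i = j₀ then (if j = i₀ then 2 * s * w i j else 0) else 0) := by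
        split_ifs <;> first | exact le_rfl | exact mul_nonneg (by linarith) (hw0 i j)
      by_cases c1 : i = i₀ ∧ j = j₀
      · obtain ⟨rfl, rfl⟩ := c1
        rw [show (d i - d j) ^ 2 = 3 / 2 * a + s by linarith]
        simp only [if_true] at e2 ⊢
        linarith
      by_cases c2 : i = j₀ ∧ j = i₀
      · obtain ⟨rfl, rfl⟩ := c2
        rw [show (d i - d j) ^ 2 = 3 / 2 * a + s by linarith [sub_sq_comm (d i) (d j)]]
        simp only [if_true] at e1 ⊢
        linarith
      have : (d i - d j) ^ 2 ≤ 3 / 2 * a - s := by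
        by_cases hij : i = j
        · subst hij
          simp only [sub_self]
          linarith
        · linarith [h4 i₀ j₀ i j hne hij c1 c2]
      have := mul_le_mul_of_nonneg_right this (hw0 i j)
      linarith
    calc ∑ i, ∑ j, (d i - d j) ^ 2 * w i j ≤ ∑ i, ∑ j, ((3 / 2 * a - s) * w i j
        + (if i = i₀ then (if j = j₀ then 2 * s * w i j else 0) else 0)
        + (if i = j₀ then (if j = i₀ then 2 * s * w i j else 0) else 0)) :=
          Finset.sum_le_sum fun i _ => Finset.sum_le_sum fun j _ => hbound i j
      _ = (3 / 2 * a - s) * (2 * (b * c)) + 2 * s * w i₀ j₀ + 2 * s * w j₀ i₀ := by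
          rw [← hwsum]
          simp only [Finset.sum_add_distrib, ← Finset.mul_sum]
          congr 1
          · congr 1
            rw [Finset.sum_eq_single i₀ (by intro x _ hx; simp [hx]) (by simp)]
            simp
          · rw [Finset.sum_eq_single j₀ (by intro x _ hx; simp [hx]) (by simp)]
            simp
      _ ≤ _ := by
          rw [hwsym i₀ j₀]
          have := mul_le_mul_of_nonneg_left (hbes i₀ j₀ hne) hs0
          change s * (2 * w i₀ j₀) ≤ _ at this
          nlinarith

lemma two_diag {n : ℕ} (d : Fin n → ℝ) (B : Matrix (Fin n) (Fin n) ℝ) :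
    frobSq (mcomm (diagonal d) B) ≤ 2 * (frobSq (diagonal d) * frobSq B) := by
  rw [frobSq_mcomm_diag, frobSq_diag]
  calc _ ≤ ∑ i, ∑ j, (2 * ∑ k, d k ^ 2) * B i j ^ 2 := by
        refine Finset.sum_le_sum fun i _ => Finset.sum_le_sum fun j _ => ?_
        exact mul_le_mul_of_nonneg_right (sq_two d i j) (sq_nonneg _)
    _ = _ := by simp only [← Finset.mul_sum, frobSq]; ring

/-- Real spectral theorem in transpose form. -/
lemma diag_exists {n : ℕ} (A : Matrix (Fin n) (Fin n) ℝ) (hA : A.IsSymm) :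
    ∃ (U : Matrix (Fin n) (Fin n) ℝ) (d : Fin n → ℝ), U * Uᵀ = 1 ∧ Uᵀ * A * U = diagonal d := by
  have hH : A.IsHermitian := by
    rw [Matrix.IsHermitian, Matrix.conjTranspose_eq_transpose_of_trivial]; exact hA
  have h1 : (hH.eigenvectorUnitary : Matrix (Fin n) (Fin n) ℝ) *
      (hH.eigenvectorUnitary : Matrix (Fin n) (Fin n) ℝ)ᵀ = 1 := by
    have := Unitary.coe_mul_star_self hH.eigenvectorUnitary
    rwa [Unitary.coe_star, Matrix.star_eq_conjTranspose,
      Matrix.conjTranspose_eq_transpose_of_trivial] at this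
  have h1' := mul_eq_one_comm.mp h1
  refine ⟨hH.eigenvectorUnitary, hH.eigenvalues, h1, ?_⟩
  have h2 := hH.spectral_theorem
  rw [Unitary.conjStarAlgAut_apply, Matrix.star_eq_conjTranspose,
    Matrix.conjTranspose_eq_transpose_of_trivial] at h2
  generalize (hH.eigenvectorUnitary : Matrix (Fin n) (Fin n) ℝ) = U at *
  have h3 : Uᵀ * A * U = (Uᵀ * U) * diagonal hH.eigenvalues * (Uᵀ * U) := by
    conv_lhs => rw [h2]
    simp only [Matrix.mul_assoc]
    rfl
  rw [h3, h1', Matrix.one_mul, Matrix.mul_one]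

lemma isSymm_conj {n : ℕ} (U B : Matrix (Fin n) (Fin n) ℝ) (hB : B.IsSymm) :
    (Uᵀ * B * U).IsSymm := by
  unfold Matrix.IsSymm at *
  simp only [Matrix.transpose_mul, Matrix.transpose_transpose, hB, Matrix.mul_assoc]

lemma key {n : ℕ} (A B C : Matrix (Fin n) (Fin n) ℝ) (hA : A.IsSymm) (hB : B.IsSymm)
    (hC : C.IsSymm) (h0 : frobIp B C = 0) :
    frobSq C * frobSq (mcomm A B) + frobSq B * frobSq (mcomm A C)
      ≤ 3 * (frobSq A * frobSq B * frobSq C) := by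
  obtain ⟨U, d, hU, hd⟩ := diag_exists A hA
  have := key_diag d (Uᵀ * B * U) (Uᵀ * C * U) (isSymm_conj U B hB) (isSymm_conj U C hC)
    (by rw [frobIp_conj U B C hU, h0])
  rw [← hd, mcomm_conj U _ _ hU, mcomm_conj U _ _ hU] at this
  simpa only [frobSq_conj U _ hU] using this

lemma key_two {n : ℕ} (A B : Matrix (Fin n) (Fin n) ℝ) (hA : A.IsSymm) :
    frobSq (mcomm A B) ≤ 2 * (frobSq A * frobSq B) := by
  obtain ⟨U, d, hU, hd⟩ := diag_exists A hA
  have := two_diag d (Uᵀ * B * U)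
  rw [← hd, mcomm_conj U _ _ hU] at this
  simpa only [frobSq_conj U _ hU] using this

lemma frobSq_mcomm_comm {n : ℕ} (A B : Matrix (Fin n) (Fin n) ℝ) :
    frobSq (mcomm A B) = frobSq (mcomm B A) := by
  unfold frobSq mcomm
  refine Finset.sum_congr rfl fun i _ => Finset.sum_congr rfl fun j _ => ?_
  simp only [Matrix.sub_apply]
  ring

lemma frobIp_comm {n : ℕ} (A B : Matrix (Fin n) (Fin n) ℝ) : frobIp A B = frobIp B A := by
  simp only [frobIp, mul_comm]

lemma final_aux (a b c u v w : ℝ) (ha : 0 ≤ a) (hb : 0 ≤ b) (hc : 0 ≤ c)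
    (hu : 3 / 2 ≤ u) (hu2 : u ≤ 2) (huv : u + v ≤ 3) (huw : u + w ≤ 3) :
    2 * (a * b * u + a * c * v + b * c * w) ≤ (a + b + c) ^ 2 := by
  have h1 : a * c * v ≤ a * c * (3 - u) :=
    mul_le_mul_of_nonneg_left (by linarith) (by positivity)
  have h2 : b * c * w ≤ b * c * (3 - u) :=
    mul_le_mul_of_nonneg_left (by linarith) (by positivity)
  nlinarith [mul_nonneg (sub_nonneg.2 hu2) (add_nonneg (add_nonneg (sq_nonneg (a - b))
    (sq_nonneg (a - c))) (sq_nonneg (b - c))), mul_nonneg (sub_nonneg.2 hu)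
    (add_nonneg (sq_nonneg (a - b)) (sq_nonneg c))]

lemma final_num (a b c u v w : ℝ) (ha : 0 ≤ a) (hb : 0 ≤ b) (hc : 0 ≤ c)
    (hu2 : u ≤ 2) (hv2 : v ≤ 2) (hw2 : w ≤ 2) (huv : u + v ≤ 3) (huw : u + w ≤ 3)
    (hvw : v + w ≤ 3) :
    2 * (a * b * u + a * c * v + b * c * w) ≤ (a + b + c) ^ 2 := by
  by_cases hu : 3 / 2 ≤ u
  · exact final_aux a b c u v w ha hb hc hu hu2 huv huw
  by_cases hv : 3 / 2 ≤ v
  · have := final_aux a c b v u w ha hc hb hv hv2 (by linarith) hvw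
    linarith
  by_cases hw : 3 / 2 ≤ w
  · have := final_aux b c a w u v hb hc ha hw hw2 (by linarith) (by linarith)
    linarith
  push Not at hu hv hw
  have h1 : a * b * u ≤ a * b * (3 / 2) := mul_le_mul_of_nonneg_left hu.le (by positivity)
  have h2 : a * c * v ≤ a * c * (3 / 2) := mul_le_mul_of_nonneg_left hv.le (by positivity)
  have h3 : b * c * w ≤ b * c * (3 / 2) := mul_le_mul_of_nonneg_left hw.le (by positivity)
  nlinarith [sq_nonneg (a - b), sq_nonneg (a - c), sq_nonneg (b - c)]

/-- The inequality for pairwise orthogonal symmetric matrices. -/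
lemma ddvv_orth {n : ℕ} (A B C : Matrix (Fin n) (Fin n) ℝ)
    (hA : A.IsSymm) (hB : B.IsSymm) (hC : C.IsSymm)
    (hAB : frobIp A B = 0) (hAC : frobIp A C = 0) (hBC : frobIp B C = 0) :
    2 * (frobSq (mcomm A B) + frobSq (mcomm A C) + frobSq (mcomm B C)) ≤
      (frobSq A + frobSq B + frobSq C) ^ 2 := by
  have k1 := key A B C hA hB hC hBC
  have k2 := key B A C hB hA hC hAC
  have k3 := key C A B hC hA hB hAB
  rw [frobSq_mcomm_comm B A] at k2
  rw [frobSq_mcomm_comm C A, frobSq_mcomm_comm C B] at k3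
  have t1 := key_two A B hA
  have t2 := key_two A C hA
  have t3 := key_two B C hB
  have ha := frobSq_nonneg A
  have hb := frobSq_nonneg B
  have hc := frobSq_nonneg C
  generalize frobSq A = a at *
  generalize frobSq B = b at *
  generalize frobSq C = c at *
  generalize frobSq (mcomm A B) = p at *
  generalize frobSq (mcomm A C) = q at *
  generalize frobSq (mcomm B C) = r at *
  rcases ha.eq_or_lt with h | ha'
  · subst h
    nlinarith [sq_nonneg (b - c)]
  rcases hb.eq_or_lt with h | hb'
  · subst h
    nlinarith [sq_nonneg (a - c)]
  rcases hc.eq_or_lt with h | hc'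
  · subst h
    nlinarith [sq_nonneg (a - b)]
  have hab := mul_pos ha' hb'
  have hac := mul_pos ha' hc'
  have hbc := mul_pos hb' hc'
  have habc := mul_pos hab hc'
  obtain ⟨u, rfl⟩ : ∃ u, p = a * b * u := ⟨p / (a * b), by field_simp⟩
  obtain ⟨v, rfl⟩ : ∃ v, q = a * c * v := ⟨q / (a * c), by field_simp⟩
  obtain ⟨w, rfl⟩ : ∃ w, r = b * c * w := ⟨r / (b * c), by field_simp⟩
  refine final_num a b c u v w ha hb hc ?_ ?_ ?_ ?_ ?_ ?_
  · exact le_of_mul_le_mul_left (by linarith) hab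
  · exact le_of_mul_le_mul_left (by linarith) hac
  · exact le_of_mul_le_mul_left (by linarith) hbc
  · exact le_of_mul_le_mul_left (by linarith) habc
  · exact le_of_mul_le_mul_left (by linarith) habc
  · exact le_of_mul_le_mul_left (by linarith) habc

/-- Rotation of a family of matrices. -/
noncomputable def rotFam {n : ℕ} (U : Matrix (Fin 3) (Fin 3) ℝ)
    (M : Fin 3 → Matrix (Fin n) (Fin n) ℝ) (i : Fin 3) : Matrix (Fin n) (Fin n) ℝ :=
  ∑ k, U k i • M k

lemma rot_ip {n : ℕ} (U : Matrix (Fin 3) (Fin 3) ℝ) (M : Fin 3 → Matrix (Fin n) (Fin n) ℝ)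
    (i j : Fin 3) : frobIp (rotFam U M i) (rotFam U M j)
      = (Uᵀ * (Matrix.of fun k l => frobIp (M k) (M l)) * U) i j := by
  simp only [Matrix.mul_apply, Fin.sum_univ_three, Matrix.transpose_apply, Matrix.of_apply, rotFam,
    frobIp, Finset.mul_sum, Finset.sum_mul, ← Finset.sum_add_distrib, Matrix.add_apply,
    Matrix.smul_apply, smul_eq_mul]
  refine Finset.sum_congr rfl fun i _ => Finset.sum_congr rfl fun j _ => ?_
  ring

lemma rot_comm {n : ℕ} (U : Matrix (Fin 3) (Fin 3) ℝ) (M : Fin 3 → Matrix (Fin n) (Fin n) ℝ)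
    (i j : Fin 3) (x y : Fin n) : mcomm (rotFam U M i) (rotFam U M j) x y
      = (Uᵀ * (Matrix.of fun k l => mcomm (M k) (M l) x y) * U) i j := by
  simp only [Matrix.mul_apply, Fin.sum_univ_three, Matrix.transpose_apply, Matrix.of_apply, rotFam,
    mcomm, Finset.mul_sum, Finset.sum_mul, ← Finset.sum_add_distrib, ← Finset.sum_sub_distrib,
    Matrix.add_apply, Matrix.sub_apply, Matrix.smul_apply, smul_eq_mul]
  refine Finset.sum_congr rfl fun i _ => ?_
  ring

lemma sum_comm_eq {n : ℕ} (M : Fin 3 → Matrix (Fin n) (Fin n) ℝ) :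
    2 * (frobSq (mcomm (M 0) (M 1)) + frobSq (mcomm (M 0) (M 2)) + frobSq (mcomm (M 1) (M 2)))
      = ∑ x, ∑ y, frobSq (Matrix.of fun k l => mcomm (M k) (M l) x y) := by
  simp only [frobSq, Finset.mul_sum, ← Finset.sum_add_distrib]
  refine Finset.sum_congr rfl fun i _ => Finset.sum_congr rfl fun j _ => ?_
  simp only [Fin.sum_univ_three, Matrix.of_apply, mcomm, Matrix.sub_apply]
  ring

lemma rot_sum {n : ℕ} (U : Matrix (Fin 3) (Fin 3) ℝ) (hU : U * Uᵀ = 1)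
    (M : Fin 3 → Matrix (Fin n) (Fin n) ℝ) :
    frobSq (rotFam U M 0) + frobSq (rotFam U M 1) + frobSq (rotFam U M 2)
      = frobSq (M 0) + frobSq (M 1) + frobSq (M 2) := by
  have h : (Uᵀ * (Matrix.of fun k l => frobIp (M k) (M l)) * U).trace
      = (Matrix.of fun k l => frobIp (M k) (M l)).trace := by
    rw [Matrix.mul_assoc, Matrix.trace_mul_comm, Matrix.mul_assoc, hU, Matrix.mul_one]
  simp only [frobSq_eq_ip, rot_ip]
  simpa only [Matrix.trace, Matrix.diag_apply, Fin.sum_univ_three, Matrix.of_apply] using h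

lemma rot_symm {n : ℕ} (U : Matrix (Fin 3) (Fin 3) ℝ) (M : Fin 3 → Matrix (Fin n) (Fin n) ℝ)
    (hM : ∀ i, (M i).IsSymm) (i : Fin 3) : (rotFam U M i).IsSymm := by
  simp only [rotFam, Fin.sum_univ_three]
  exact (((hM 0).smul _).add ((hM 1).smul _)).add ((hM 2).smul _)

lemma ddvv_fam {n : ℕ} (M : Fin 3 → Matrix (Fin n) (Fin n) ℝ) (hM : ∀ i, (M i).IsSymm) :
    2 * (frobSq (mcomm (M 0) (M 1)) + frobSq (mcomm (M 0) (M 2)) + frobSq (mcomm (M 1) (M 2)))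
      ≤ (frobSq (M 0) + frobSq (M 1) + frobSq (M 2)) ^ 2 := by
  obtain ⟨U, d, hU, hd⟩ := diag_exists (Matrix.of fun k l => frobIp (M k) (M l))
    (by ext i j; exact frobIp_comm _ _)
  have hip : ∀ i j, i ≠ j → frobIp (rotFam U M i) (rotFam U M j) = 0 := by
    intro i j hij
    rw [rot_ip, hd, Matrix.diagonal_apply_ne d hij]
  have h := ddvv_orth (rotFam U M 0) (rotFam U M 1) (rotFam U M 2) (rot_symm U M hM 0)
    (rot_symm U M hM 1) (rot_symm U M hM 2) (hip 0 1 (by decide)) (hip 0 2 (by decide))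
    (hip 1 2 (by decide))
  rw [rot_sum U hU, sum_comm_eq] at h
  rw [sum_comm_eq]
  refine le_trans (le_of_eq ?_) h
  refine Finset.sum_congr rfl fun x _ => Finset.sum_congr rfl fun y _ => ?_
  have : (Matrix.of fun k l => mcomm (rotFam U M k) (rotFam U M l) x y)
      = Uᵀ * (Matrix.of fun k l => mcomm (M k) (M l) x y) * U := by
    ext i j
    exact rot_comm U M i j x y
  rw [this, frobSq_conj U _ hU]

/-- For real symmetric traceless `n × n` matrices `A, B, C`,
`(‖A‖² + ‖B‖² + ‖C‖²)² ≥ 2‖[A,B]‖² + 2‖[B,C]‖² + 2‖[C,A]‖²`. -/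
theorem ddvv_traceless_n_3 (n : ℕ) (A B C : Matrix (Fin n) (Fin n) ℝ)
    (hA : A.IsSymm) (hB : B.IsSymm) (hC : C.IsSymm)
    (hA0 : A.trace = 0) (hB0 : B.trace = 0) (hC0 : C.trace = 0) :
    (frobSq A + frobSq B + frobSq C) ^ 2 ≥
      2 * frobSq (mcomm A B) + 2 * frobSq (mcomm B C) + 2 * frobSq (mcomm C A) := by
  have h := ddvv_fam ![A, B, C] (by intro i; fin_cases i <;> assumption)
  change 2 * (frobSq (mcomm A B) + frobSq (mcomm A C) + frobSq (mcomm B C))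
    ≤ (frobSq A + frobSq B + frobSq C) ^ 2 at h
  rw [frobSq_mcomm_comm C A]
  linarith
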